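/- Let U be an open convex set of d×d complex matrices containing the set D of density matrices, and let f : U → ℝ be convex and differentiable with Hermitian gradient f', where f' is locally Lipschitz on U. Fix parameters α > 0, r ∈ (0,1), τ ∈ (0,1), and let (ρ_k) in D and (α_k) be generated by the exponentiated gradient method with Armijo line search. Suppose a subsequence (ρ_{k_j}) converges to some ρ̄ ∈ D. Then there exists a constant β > 0 such that D(ρ_{k_j}(β), ρ_{k_j}) → 0 as j → ∞, where ρ_{k_j}(β) := ρ_{f'(ρ_{k_j})}(β). -/

import Mathlib

open scoped Matrix ComplexOrder

noncomputable section

/-- The space of `d × d` complex matrices. -/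
abbrev Mat (d : ℕ) := Matrix (Fin d) (Fin d) ℂ

/-- Matrix exponential of a Hermitian matrix, via the real continuous functional calculus
(i.e. the functional calculus on the eigenvalues). -/
noncomputable def mexp {d : ℕ} (A : Mat d) : Mat d := cfc Real.exp A

/-- Matrix logarithm of a positive definite Hermitian matrix, via the real continuous
functional calculus. -/
noncomputable def mlog {d : ℕ} (A : Mat d) : Mat d := cfc Real.log A

/-- A density matrix: Hermitian, positive semidefinite, trace one. -/
def IsDensity {d : ℕ} (ρ : Mat d) : Prop := ρ.PosSemidef ∧ ρ.trace = 1

/-- The real part of the Hilbert–Schmidt inner product `tr (Xᴴ Y)` (which is real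
when `X` and `Y` are Hermitian). -/
noncomputable def hsInner {d : ℕ} (X Y : Mat d) : ℝ := (Matrix.trace (Xᴴ * Y)).re

/-- `tr (σ log σ) = ∑ᵢ λᵢ log λᵢ` over the eigenvalues of `σ` (the convention
`0 log 0 = 0` matches `Real.log 0 = 0`), via the functional calculus for `x ↦ x log x`. -/
noncomputable def trEnt {d : ℕ} (σ : Mat d) : ℝ :=
  (Matrix.trace (cfc (fun x : ℝ => x * Real.log x) σ)).re

/-- The quantum relative entropy `D(σ, ρ) = tr (σ log σ) - tr (σ log ρ)` (for `σ` a
density matrix and `ρ` a nonsingular density matrix). -/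
noncomputable def qRelEnt {d : ℕ} (σ ρ : Mat d) : ℝ :=
  trEnt σ - (Matrix.trace (σ * mlog ρ)).re

/-- The exponentiated-gradient step `ρ_G(α) = c⁻¹ exp (log ρ - α G)` where
`c = tr exp (log ρ - α G)`. -/
noncomputable def egStep {d : ℕ} (ρ G : Mat d) (α : ℝ) : Mat d :=
  (Matrix.trace (mexp (mlog ρ - α • G)))⁻¹ • mexp (mlog ρ - α • G)

attribute [local instance] Matrix.frobeniusNormedAddCommGroup Matrix.frobeniusNormedSpace

/-- `f` is (Fréchet) differentiable at `x` with gradient `g`, with respect to the real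
inner product `Re tr (Xᴴ Y)`: the derivative is `V ↦ Re tr (gᴴ V)`. -/
def HasMatGradientAt {d : ℕ} (f : Mat d → ℝ) (g : Mat d) (x : Mat d) : Prop :=
  ∃ L : Mat d →L[ℝ] ℝ, HasFDerivAt f L x ∧ ∀ V : Mat d, L V = (Matrix.trace (gᴴ * V)).re

/-- The sequences `(ρ_k)` and `(α_k)` are generated by the exponentiated gradient method
with Armijo line search with parameters `α > 0`, `r ∈ (0,1)`, `τ ∈ (0,1)`: the initial
iterate is nonsingular, `ρ_{k+1} = ρ_k(α_k)`, each `α_k = α rᵐ` for some natural `m`, the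
Armijo condition holds at `α_k`, and either `m = 0` or the Armijo condition fails at
`α_k / r`. -/
def IsEGArmijo {d : ℕ} (f : Mat d → ℝ) (f' : Mat d → Mat d) (α r τ : ℝ)
    (ρseq : ℕ → Mat d) (αseq : ℕ → ℝ) : Prop :=
  (ρseq 0).PosDef ∧
  (∀ k, ρseq (k + 1) = egStep (ρseq k) (f' (ρseq k)) (αseq k)) ∧
  (∀ k, ∃ m : ℕ, αseq k = α * r ^ m ∧
    f (ρseq (k + 1)) ≤ f (ρseq k) + τ * hsInner (f' (ρseq k)) (ρseq (k + 1) - ρseq k) ∧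
    (m = 0 ∨
      f (egStep (ρseq k) (f' (ρseq k)) (αseq k / r)) >
        f (ρseq k) +
          τ * hsInner (f' (ρseq k)) (egStep (ρseq k) (f' (ρseq k)) (αseq k / r) - ρseq k)))

/-!
For Hermitian `G` and `σ` of trace one, `log ρ_G(β)` differs from `log ρ - β G` by a multiple of the
identity, which gives the three-point identity
`D(σ, ρ_G(β)) + D(ρ_G(β), ρ) = D(σ, ρ) + β ⟨G, σ - ρ_G(β)⟩`.
With `σ = ρ_G(γ)` it shows that `β ↦ D(ρ_G(β), ρ)` is monotone on `[0, ∞)`. With `σ = ρ` and the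
quantum Pinsker inequality it gives `‖ρ_G(β) - ρ‖² ≤ -β ⟨G, ρ_G(β) - ρ⟩`.

The second estimate and the descent lemma make the Armijo condition hold for all step sizes in some
`(0, β₀]`, uniformly over nonsingular densities near `ρ̄`, so that along the subsequence the
step sizes are eventually at least `β = min α (r β₀)`. By monotonicity
`D(ρ_k(β), ρ_k) ≤ D(ρ_{k+1}, ρ_k)`, and the Armijo condition bounds the right-hand side by
`(α / τ) (f(ρ_k) - f(ρ_{k+1}))`, which tends to `0` because `f(ρ_k)` is decreasing with a
convergent subsequence.

Pinsker's inequality follows from Klein's: expanding the traces in eigenbases of `σ` and `ρ` with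
nonnegative weights reduces it to `(a - b)² ≤ 2 (a log a - a log b - a + b)` for
`a ∈ [0, 1]`, `b ∈ (0, 1]`.
-/

section TraceInequality

variable {n 𝕜 : Type*} [Fintype n] [DecidableEq n] [RCLike 𝕜] {A B : Matrix n n 𝕜}

lemma continuousOn_spectrum_real (f : ℝ → ℝ) (A : Matrix n n 𝕜) :
    ContinuousOn f (spectrum ℝ A) :=
  A.finite_real_spectrum.continuousOn f

open scoped MatrixOrder in
lemma posDef_cfc_iff {f : ℝ → ℝ} (hA : A.IsHermitian) :
    (cfc f A).PosDef ↔ ∀ x ∈ spectrum ℝ A, 0 < f x := by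
  rw [← Matrix.isStrictlyPositive_iff_posDef]
  exact cfc_isStrictlyPositive_iff f A (continuousOn_spectrum_real f A) hA.isSelfAdjoint

open scoped MatrixOrder in
lemma spectrum_real_pos (hA : A.PosDef) {x : ℝ} (hx : x ∈ spectrum ℝ A) : 0 < x :=
  hA.isStrictlyPositive.spectrum_pos hx

/-- The squared moduli of the inner products between the eigenvectors of `A` and those of `B`. -/
def eigenOverlap (hA : A.IsHermitian) (hB : B.IsHermitian) (i j : n) : ℝ :=
  RCLike.normSq
    ((star (hA.eigenvectorUnitary : Matrix n n 𝕜) * (hB.eigenvectorUnitary : Matrix n n 𝕜)) i j)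

lemma re_trace_cfc_mul_cfc (hA : A.IsHermitian) (hB : B.IsHermitian) (g h : ℝ → ℝ) :
    RCLike.re (cfc g A * cfc h B).trace =
      ∑ i, ∑ j, eigenOverlap hA hB i j * (g (hA.eigenvalues i) * h (hB.eigenvalues j)) := by
  have trace_conj (P S D E : Matrix n n 𝕜) : (P * D * star P * (S * E * star S)).trace =
      (D * (star P * S) * E * star (star P * S)).trace := by
    rw [star_mul, star_star]
    simp only [Matrix.mul_assoc]
    rw [Matrix.trace_mul_comm]
    simp only [Matrix.mul_assoc]
  have re_mul_mul_star (a b : ℝ) (z : 𝕜) :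
      RCLike.re (a * z * b * star z) = RCLike.normSq z * (a * b) := by
    have : (a * z * b * star z : 𝕜) = (a * b : 𝕜) * (z * star z) := by ring
    rw [this, RCLike.star_def, RCLike.mul_conj, ← RCLike.ofReal_mul, ← RCLike.ofReal_pow,
      ← RCLike.ofReal_mul, RCLike.ofReal_re, RCLike.normSq_eq_def', mul_comm]
  rw [hA.cfc_eq, hB.cfc_eq, Matrix.IsHermitian.cfc, Matrix.IsHermitian.cfc,
    Unitary.conjStarAlgAut_apply, Unitary.conjStarAlgAut_apply, trace_conj, Matrix.trace, map_sum]
  refine Finset.sum_congr rfl fun i _ => ?_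
  rw [Matrix.diag_apply, Matrix.mul_apply, map_sum]
  refine Finset.sum_congr rfl fun j _ => ?_
  rw [Matrix.mul_diagonal, Matrix.diagonal_mul, Matrix.star_apply]
  exact re_mul_mul_star _ _ _

lemma sum_re_trace_cfc_mul_cfc_nonneg {ι : Type*} {s : Finset ι} {g h : ι → ℝ → ℝ}
    (hA : A.IsHermitian) (hB : B.IsHermitian)
    (hgh : ∀ a ∈ spectrum ℝ A, ∀ b ∈ spectrum ℝ B, 0 ≤ ∑ k ∈ s, g k a * h k b) :
    0 ≤ ∑ k ∈ s, RCLike.re (cfc (g k) A * cfc (h k) B).trace := by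
  calc 0 ≤ ∑ i, ∑ j, eigenOverlap hA hB i j *
        ∑ k ∈ s, g k (hA.eigenvalues i) * h k (hB.eigenvalues j) :=
        Finset.sum_nonneg fun i _ => Finset.sum_nonneg fun j _ =>
          mul_nonneg (RCLike.normSq_nonneg _) <|
            hgh _ (hA.eigenvalues_mem_spectrum_real i) _ (hB.eigenvalues_mem_spectrum_real j)
    _ = ∑ k ∈ s, RCLike.re (cfc (g k) A * cfc (h k) B).trace := by
        simp only [re_trace_cfc_mul_cfc hA hB, Finset.mul_sum]
        exact (Finset.sum_congr rfl fun _ _ => Finset.sum_comm).trans Finset.sum_comm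

end TraceInequality

lemma sq_sub_le_two_mul_relEntropy {a b : ℝ} (ha : 0 ≤ a) (ha' : a ≤ 1) (hb : 0 < b)
    (hb' : b ≤ 1) :
    (a - b) ^ 2 ≤ 2 * (a * Real.log a - a * Real.log b - a + b) := by
  rcases ha.eq_or_lt with rfl | ha
  · nlinarith
  have log_div : Real.log a - Real.log b = Real.log (a / b) := (Real.log_div ha.ne' hb.ne').symm
  rcases le_total a b with hab | hab
  · have h : (a / b - b / a) / 2 ≤ Real.log a - Real.log b := by
      rw [log_div, ← inv_div a b, ← Real.sinh_log (div_pos ha hb), Real.sinh_le_self_iff]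
      exact Real.log_nonpos (by positivity) ((div_le_one hb).2 hab)
    calc (a - b) ^ 2 ≤ (a - b) ^ 2 / b := le_div_self (sq_nonneg _) hb hb'
      _ = 2 * (a * ((a / b - b / a) / 2) - a + b) := by field_simp; ring
      _ ≤ 2 * (a * (Real.log a - Real.log b) - a + b) := by gcongr
      _ = _ := by ring
  · have h : 2 * (a - b) / (a + b) ≤ Real.log a - Real.log b := by
      have := Real.le_log_one_add_of_nonneg (sub_nonneg.2 ((one_le_div hb).2 hab))
      rw [add_sub_cancel, ← log_div] at this
      convert this using 1
      field_simp
      ring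
    calc (a - b) ^ 2 ≤ 2 * ((a - b) ^ 2 / (a + b)) := by
          rw [mul_div_assoc', le_div_iff₀ (by positivity)]
          nlinarith [sq_nonneg (a - b)]
      _ = 2 * (a * (2 * (a - b) / (a + b)) - a + b) := by field_simp; ring
      _ ≤ 2 * (a * (Real.log a - Real.log b) - a + b) := by gcongr
      _ = _ := by ring

variable {d : ℕ}

lemma hsInner_eq_re_inner (X Y : Mat d) :
    hsInner X Y = (inner ℂ (WithLp.toLp 2 X.vec) (WithLp.toLp 2 Y.vec)).re := by
  rw [EuclideanSpace.inner_eq_star_dotProduct, dotProduct_comm, Matrix.star_vec_dotProduct_vec,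
    hsInner]

lemma norm_toLp_vec (X : Mat d) : ‖WithLp.toLp 2 X.vec‖ = ‖X‖ := by
  rw [EuclideanSpace.norm_eq, Matrix.frobenius_norm_def, Real.sqrt_eq_rpow, Finset.sum_comm,
    Fintype.sum_prod_type]
  simp [Matrix.vec]

lemma hsInner_self (X : Mat d) : hsInner X X = ‖X‖ ^ 2 := by
  rw [hsInner_eq_re_inner, ← norm_toLp_vec, ← inner_self_eq_norm_sq (𝕜 := ℂ),
    RCLike.re_eq_complex_re]

lemma abs_hsInner_le (X Y : Mat d) : |hsInner X Y| ≤ ‖X‖ * ‖Y‖ := by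
  rw [hsInner_eq_re_inner, ← norm_toLp_vec X, ← norm_toLp_vec Y]
  exact (Complex.abs_re_le_norm _).trans (norm_inner_le_norm _ _)

lemma hsInner_sub_left (X Y Z : Mat d) : hsInner (X - Y) Z = hsInner X Z - hsInner Y Z := by
  simp [hsInner, Matrix.sub_mul, Matrix.trace_sub]

lemma hsInner_sub_right (X Y Z : Mat d) : hsInner X (Y - Z) = hsInner X Y - hsInner X Z := by
  simp [hsInner, Matrix.mul_sub, Matrix.trace_sub]

lemma sq_norm_sub_eq {A B : Mat d} (hA : A.IsHermitian) (hB : B.IsHermitian) :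
    ‖A - B‖ ^ 2 = (A ^ 2).trace.re - 2 * (A * B).trace.re + (B ^ 2).trace.re := by
  rw [← hsInner_self, hsInner, (hA.sub hB).eq, sub_mul, mul_sub, mul_sub]
  simp only [Matrix.trace_sub, Complex.sub_re, Matrix.trace_mul_comm B A, ← sq]
  ring

/-- A nonsingular (positive definite) density matrix. -/
structure IsNonsingularDensity (ρ : Mat d) : Prop where
  posDef : ρ.PosDef
  trace_eq_one : ρ.trace = 1

lemma IsNonsingularDensity.isDensity {ρ : Mat d} (hρ : IsNonsingularDensity ρ) : IsDensity ρ :=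
  ⟨hρ.posDef.posSemidef, hρ.trace_eq_one⟩

lemma IsDensity.spectrum_subset_Icc {ρ : Mat d} (hρ : IsDensity ρ) :
    spectrum ℝ ρ ⊆ Set.Icc 0 1 := by
  have sum_eq_one : ∑ i, hρ.1.1.eigenvalues i = 1 := by
    apply Complex.ofReal_injective
    simpa [hρ.2] using hρ.1.1.trace_eq_sum_eigenvalues.symm
  rw [hρ.1.1.spectrum_real_eq_range_eigenvalues]
  rintro _ ⟨i, rfl⟩
  refine ⟨hρ.1.eigenvalues_nonneg i, sum_eq_one ▸ ?_⟩
  exact Finset.single_le_sum (fun j _ => hρ.1.eigenvalues_nonneg j) (Finset.mem_univ i)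

lemma IsNonsingularDensity.spectrum_subset_Ioc {ρ : Mat d} (hρ : IsNonsingularDensity ρ) :
    spectrum ℝ ρ ⊆ Set.Ioc 0 1 := fun _ hx =>
  ⟨spectrum_real_pos hρ.posDef hx, (hρ.isDensity.spectrum_subset_Icc hx).2⟩

lemma convex_setOf_isDensity : Convex ℝ {ρ : Mat d | IsDensity ρ} := by
  rintro σ ⟨hσ, hσ'⟩ ρ ⟨hρ, hρ'⟩ a b ha hb hab
  refine ⟨(hσ.smul ha).add (hρ.smul hb), ?_⟩
  rw [Matrix.trace_add, Matrix.trace_smul, Matrix.trace_smul, hσ', hρ', ← add_smul, hab, one_smul]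

lemma IsDensity.neZero {ρ : Mat d} (hρ : IsDensity ρ) : NeZero d := by
  refine ⟨?_⟩
  rintro rfl
  simpa [Matrix.trace] using hρ.2

lemma trEnt_eq_re_trace_mul_mlog {σ : Mat d} (hσ : σ.IsHermitian) :
    trEnt σ = (σ * mlog σ).trace.re := by
  rw [trEnt, mlog, cfc_mul (fun x : ℝ => x) Real.log σ (continuousOn_spectrum_real _ _)
    (continuousOn_spectrum_real _ _), cfc_id' ℝ σ hσ.isSelfAdjoint]

lemma sq_norm_sub_le_two_mul_qRelEnt {σ ρ : Mat d} (hσ : IsDensity σ)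
    (hρ : IsNonsingularDensity ρ) : ‖σ - ρ‖ ^ 2 ≤ 2 * qRelEnt σ ρ := by
  have hσH : IsSelfAdjoint σ := hσ.1.1.isSelfAdjoint
  have hρH : IsSelfAdjoint ρ := hρ.posDef.1.isSelfAdjoint
  -- The scalar bound, written as a sum of products of a function of `a` and a function of `b`.
  have klein := sum_re_trace_cfc_mul_cfc_nonneg (s := Finset.univ)
    (g := ![fun x => x * Real.log x - (x + 2⁻¹ * x ^ 2), fun x => x, fun _ => 1])
    (h := ![fun _ => 1, fun x => x - Real.log x, fun x => x - 2⁻¹ * x ^ 2]) hσH hρH ?_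
  · have hc (f : ℝ → ℝ) (A : Mat d) := continuousOn_spectrum_real f A
    have hg : cfc (fun x => x * Real.log x - (x + 2⁻¹ * x ^ 2)) σ =
        cfc (fun x : ℝ => x * Real.log x) σ - (σ + (2⁻¹ : ℝ) • σ ^ 2) := by
      rw [cfc_sub _ _ σ (hc _ _) (hc _ _), cfc_add σ _ _ (hc _ _) (hc _ _),
        cfc_const_mul _ _ σ (hc _ _), cfc_pow_id σ 2 hσH, cfc_id' ℝ σ hσH]
    have hh₁ : cfc (fun x => x - Real.log x) ρ = ρ - mlog ρ := by
      rw [cfc_sub _ _ ρ (hc _ _) (hc _ _), cfc_id' ℝ ρ hρH, mlog]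
    have hh₂ : cfc (fun x : ℝ => x - 2⁻¹ * x ^ 2) ρ = ρ - (2⁻¹ : ℝ) • ρ ^ 2 := by
      rw [cfc_sub _ _ ρ (hc _ _) (hc _ _), cfc_const_mul _ _ ρ (hc _ _), cfc_pow_id ρ 2 hρH,
        cfc_id' ℝ ρ hρH]
    simp only [Fin.sum_univ_three, Matrix.cons_val, RCLike.re_to_complex, hg, hh₁, hh₂,
      cfc_id' ℝ σ hσH, cfc_const_one ℝ σ hσH, cfc_const_one ℝ ρ hρH, mul_one, one_mul, mul_sub,
      Matrix.trace_sub, Matrix.trace_add, Matrix.trace_smul, hσ.2, hρ.2, Complex.sub_re,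
      Complex.add_re, Complex.smul_re, Complex.one_re, smul_eq_mul] at klein
    rw [sq_norm_sub_eq hσ.1.1 hρ.posDef.1, qRelEnt, trEnt]
    linarith
  · intro a ha b hb
    have := sq_sub_le_two_mul_relEntropy (hσ.spectrum_subset_Icc ha).1
      (hσ.spectrum_subset_Icc ha).2 (hρ.spectrum_subset_Ioc hb).1 (hρ.spectrum_subset_Ioc hb).2
    simp only [Fin.sum_univ_three, Matrix.cons_val]
    linarith

lemma qRelEnt_nonneg {σ ρ : Mat d} (hσ : IsDensity σ) (hρ : IsNonsingularDensity ρ) :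
    0 ≤ qRelEnt σ ρ := by
  linarith [sq_norm_sub_le_two_mul_qRelEnt hσ hρ, sq_nonneg ‖σ - ρ‖]

lemma isHermitian_mlog (A : Mat d) : (mlog A).IsHermitian :=
  cfc_predicate (p := IsSelfAdjoint) Real.log A

lemma isHermitian_mlog_sub_smul {G : Mat d} (ρ : Mat d) (hG : G.IsHermitian) (β : ℝ) :
    (mlog ρ - β • G).IsHermitian :=
  (isHermitian_mlog ρ).sub (hG.smul (IsSelfAdjoint.all β))

lemma posDef_mexp {A : Mat d} (hA : A.IsHermitian) : (mexp A).PosDef :=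
  (posDef_cfc_iff hA).2 fun x _ => Real.exp_pos x

lemma mlog_mexp {A : Mat d} (hA : A.IsHermitian) : mlog (mexp A) = A := by
  rw [mlog, mexp, ← cfc_comp' Real.log Real.exp A ((A.finite_real_spectrum.image _).continuousOn _)
    (continuousOn_spectrum_real _ _) hA.isSelfAdjoint]
  simp only [Real.log_exp, cfc_id' ℝ A hA.isSelfAdjoint]

lemma mlog_smul {A : Mat d} (hA : A.PosDef) {c : ℝ} (hc : 0 < c) :
    mlog (c • A) = Real.log c • (1 : Mat d) + mlog A := by
  have hA' : IsSelfAdjoint A := hA.1.isSelfAdjoint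
  have log_smul : Set.EqOn (fun x => Real.log (c • x)) (fun x => Real.log c + Real.log x)
      (spectrum ℝ A) := fun x hx =>
    Real.log_mul hc.ne' (spectrum_real_pos hA hx).ne'
  rw [mlog, mlog,
    ← cfc_comp_smul c Real.log A ((A.finite_real_spectrum.image _).continuousOn _) hA',
    cfc_congr log_smul, cfc_const_add _ _ A (continuousOn_spectrum_real _ _) hA',
    Algebra.algebraMap_eq_smul_one]

lemma qRelEnt_self {ρ : Mat d} (hρ : ρ.IsHermitian) : qRelEnt ρ ρ = 0 := by
  rw [qRelEnt, trEnt_eq_re_trace_mul_mlog hρ, sub_self]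

section EGStep

variable [NeZero d] {ρ G : Mat d}

lemma egStep_eq_smul (ρ : Mat d) (hG : G.IsHermitian) (β : ℝ) :
    ∃ c > (0 : ℝ), egStep ρ G β = c • mexp (mlog ρ - β • G) := by
  have hexp : (mexp (mlog ρ - β • G)).PosDef := posDef_mexp (isHermitian_mlog_sub_smul ρ hG β)
  obtain ⟨c, hc, htrace⟩ := RCLike.pos_iff_exists_ofReal.1 hexp.trace_pos
  refine ⟨c⁻¹, inv_pos.2 hc, ?_⟩
  rw [egStep, ← htrace, ← RCLike.ofReal_inv]
  exact (RCLike.real_smul_eq_coe_smul (K := ℂ) _ _).symm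

lemma isNonsingularDensity_egStep (ρ : Mat d) (hG : G.IsHermitian) (β : ℝ) :
    IsNonsingularDensity (egStep ρ G β) := by
  have hexp : (mexp (mlog ρ - β • G)).PosDef := posDef_mexp (isHermitian_mlog_sub_smul ρ hG β)
  obtain ⟨c, hc, heq⟩ := egStep_eq_smul ρ hG β
  refine ⟨heq ▸ hexp.smul hc, ?_⟩
  rw [egStep, Matrix.trace_smul, smul_eq_mul, inv_mul_cancel₀ hexp.trace_pos.ne']

lemma exists_mlog_egStep_eq (ρ : Mat d) (hG : G.IsHermitian) (β : ℝ) :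
    ∃ l : ℝ, mlog (egStep ρ G β) = l • (1 : Mat d) + (mlog ρ - β • G) := by
  have hH := isHermitian_mlog_sub_smul ρ hG β
  obtain ⟨c, hc, heq⟩ := egStep_eq_smul ρ hG β
  exact ⟨Real.log c, by rw [heq, mlog_smul (posDef_mexp hH) hc, mlog_mexp hH]⟩

lemma qRelEnt_egStep_add_qRelEnt {σ : Mat d} (hσ : σ.trace = 1) (ρ : Mat d)
    (hG : G.IsHermitian) (β : ℝ) :
    qRelEnt σ (egStep ρ G β) + qRelEnt (egStep ρ G β) ρ =
      qRelEnt σ ρ + β * hsInner G (σ - egStep ρ G β) := by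
  have hstep := isNonsingularDensity_egStep ρ hG β
  obtain ⟨l, hl⟩ := exists_mlog_egStep_eq ρ hG β
  have trace_mul_mlog {η : Mat d} (hη : η.trace = 1) :
      (η * mlog (egStep ρ G β)).trace.re =
        l + (η * mlog ρ).trace.re - β * hsInner G η := by
    rw [hl, mul_add, mul_sub, Matrix.trace_add, Matrix.trace_sub, Matrix.mul_smul,
      Matrix.mul_smul, mul_one, Matrix.trace_smul, Matrix.trace_smul, hη, hsInner, hG.eq,
      Matrix.trace_mul_comm G η]
    simp only [Complex.add_re, Complex.sub_re, Complex.smul_re, Complex.one_re, smul_eq_mul]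
    ring
  rw [qRelEnt, qRelEnt, qRelEnt, trEnt_eq_re_trace_mul_mlog hstep.posDef.1,
    trace_mul_mlog hσ, trace_mul_mlog hstep.trace_eq_one, hsInner_sub_right]
  ring

lemma qRelEnt_add_qRelEnt_egStep (hρ : IsNonsingularDensity ρ) (hG : G.IsHermitian) (β : ℝ) :
    qRelEnt ρ (egStep ρ G β) + qRelEnt (egStep ρ G β) ρ =
      -(β * hsInner G (egStep ρ G β - ρ)) := by
  rw [qRelEnt_egStep_add_qRelEnt hρ.trace_eq_one ρ hG β, qRelEnt_self hρ.posDef.1,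
    hsInner_sub_right, hsInner_sub_right]
  ring

lemma qRelEnt_egStep_le (hρ : IsNonsingularDensity ρ) (hG : G.IsHermitian) (β : ℝ) :
    qRelEnt (egStep ρ G β) ρ ≤ -(β * hsInner G (egStep ρ G β - ρ)) := by
  rw [← qRelEnt_add_qRelEnt_egStep hρ hG β]
  exact le_add_of_nonneg_left <|
    qRelEnt_nonneg hρ.isDensity (isNonsingularDensity_egStep ρ hG β)

lemma sq_norm_egStep_sub_le (hρ : IsNonsingularDensity ρ) (hG : G.IsHermitian) (β : ℝ) :
    ‖egStep ρ G β - ρ‖ ^ 2 ≤ -(β * hsInner G (egStep ρ G β - ρ)) := by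
  have hstep := isNonsingularDensity_egStep ρ hG β
  have pinsker := sq_norm_sub_le_two_mul_qRelEnt hρ.isDensity hstep
  have pinsker' := sq_norm_sub_le_two_mul_qRelEnt hstep.isDensity hρ
  rw [norm_sub_rev] at pinsker
  linarith [qRelEnt_add_qRelEnt_egStep hρ hG β]

lemma hsInner_egStep_sub_nonpos (hρ : IsNonsingularDensity ρ) (hG : G.IsHermitian) {β : ℝ}
    (hβ : 0 < β) : hsInner G (egStep ρ G β - ρ) ≤ 0 :=
  nonpos_of_mul_nonpos_right
    (neg_nonneg.1 ((sq_nonneg _).trans (sq_norm_egStep_sub_le hρ hG β))) hβ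

lemma norm_egStep_sub_le (hρ : IsNonsingularDensity ρ) (hG : G.IsHermitian) {β : ℝ}
    (hβ : 0 ≤ β) : ‖egStep ρ G β - ρ‖ ≤ β * ‖G‖ := by
  rcases (norm_nonneg (egStep ρ G β - ρ)).eq_or_lt with h | h
  · rw [← h]
    positivity
  · refine le_of_mul_le_mul_right ?_ h
    calc ‖egStep ρ G β - ρ‖ * ‖egStep ρ G β - ρ‖
        ≤ β * -hsInner G (egStep ρ G β - ρ) := by
          rw [← sq, mul_neg]
          exact sq_norm_egStep_sub_le hρ hG β
      _ ≤ β * (‖G‖ * ‖egStep ρ G β - ρ‖) := by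
          gcongr
          exact (neg_le_abs _).trans (abs_hsInner_le _ _)
      _ = β * ‖G‖ * ‖egStep ρ G β - ρ‖ := by rw [mul_assoc]

lemma monotoneOn_qRelEnt_egStep (ρ : Mat d) (hG : G.IsHermitian) :
    MonotoneOn (fun β => qRelEnt (egStep ρ G β) ρ) (Set.Ici 0) := by
  intro β hβ γ _ hβγ
  rcases hβγ.eq_or_lt with rfl | hlt
  · exact le_rfl
  have hβd := isNonsingularDensity_egStep ρ hG β
  have hγd := isNonsingularDensity_egStep ρ hG γ
  have hβ_point := qRelEnt_egStep_add_qRelEnt hγd.trace_eq_one ρ hG β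
  have hγ_point := qRelEnt_egStep_add_qRelEnt hβd.trace_eq_one ρ hG γ
  have hβγ_nonneg := qRelEnt_nonneg hβd.isDensity hγd
  have hγβ_nonneg := qRelEnt_nonneg hγd.isDensity hβd
  rw [hsInner_sub_right] at hβ_point hγ_point
  have hinner : 0 ≤ hsInner G (egStep ρ G β) - hsInner G (egStep ρ G γ) := by
    refine nonneg_of_mul_nonneg_right ?_ (sub_pos.2 hlt)
    linarith
  linarith [mul_nonneg (Set.mem_Ici.1 hβ) hinner]

end EGStep

section Armijo

open Filter Topology

variable {f : Mat d → ℝ} {f' : Mat d → Mat d}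

lemma le_add_hsInner_add_of_lipschitzOnWith {s : Set (Mat d)} (hs : Convex ℝ s)
    (hgrad : ∀ x ∈ s, HasMatGradientAt f (f' x) x) {K : NNReal} (hf' : LipschitzOnWith K f' s)
    {x y : Mat d} (hx : x ∈ s) (hy : y ∈ s) :
    f y ≤ f x + hsInner (f' x) (y - x) + K * ‖y - x‖ ^ 2 := by
  have hseg (t : ℝ) (ht : t ∈ Set.Icc 0 1) : x + t • (y - x) ∈ s := hs.add_smul_sub_mem hx hy ht
  have hderiv (t : ℝ) (ht : t ∈ Set.Icc 0 1) :
      HasDerivAt (fun t : ℝ => f (x + t • (y - x))) (hsInner (f' (x + t • (y - x))) (y - x)) t := by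
    obtain ⟨L, hL, hL_apply⟩ := hgrad _ (hseg t ht)
    rw [hsInner, ← hL_apply]
    exact hL.comp_hasDerivAt t (by
      simpa using ((hasDerivAt_id t).smul_const (y - x)).const_add x)
  obtain ⟨t, ht, hslope⟩ := exists_hasDerivAt_eq_slope _ _ one_pos
    (fun t ht => (hderiv t ht).continuousAt.continuousWithinAt)
    (fun t ht => hderiv t (Set.Ioo_subset_Icc_self ht))
  replace ht := Set.Ioo_subset_Icc_self ht
  have hincrement : hsInner (f' (x + t • (y - x)) - f' x) (y - x) ≤ K * ‖y - x‖ ^ 2 := by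
    calc hsInner (f' (x + t • (y - x)) - f' x) (y - x)
        ≤ ‖f' (x + t • (y - x)) - f' x‖ * ‖y - x‖ := (le_abs_self _).trans (abs_hsInner_le _ _)
      _ ≤ K * (t * ‖y - x‖) * ‖y - x‖ := by
          gcongr
          refine (hf'.norm_sub_le (hseg t ht) hx).trans_eq ?_
          rw [add_sub_cancel_left, norm_smul, Real.norm_of_nonneg ht.1]
      _ ≤ K * (1 * ‖y - x‖) * ‖y - x‖ := by
          gcongr
          exact ht.2
      _ = K * ‖y - x‖ ^ 2 := by ring
  simp only [one_smul, zero_smul, add_zero, add_sub_cancel, sub_zero, div_one] at hslope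
  rw [hsInner_sub_left] at hincrement
  linarith

/-- The Armijo sufficient-decrease condition with parameter `τ` for the step size `β` at `ρ`. -/
def SatisfiesArmijo (f : Mat d → ℝ) (f' : Mat d → Mat d) (τ : ℝ) (ρ : Mat d) (β : ℝ) : Prop :=
  f (egStep ρ (f' ρ) β) ≤ f ρ + τ * hsInner (f' ρ) (egStep ρ (f' ρ) β - ρ)

variable [NeZero d]

lemma satisfiesArmijo_of_mul_le {s : Set (Mat d)} (hs : Convex ℝ s)
    (hgrad : ∀ x ∈ s, HasMatGradientAt f (f' x) x) {K : NNReal} (hf' : LipschitzOnWith K f' s)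
    {ρ : Mat d} (hρ : IsNonsingularDensity ρ) (hherm : (f' ρ).IsHermitian) {τ β : ℝ} (hβ : 0 < β)
    (hKβ : K * β ≤ 1 - τ) (hρs : ρ ∈ s) (hstep : egStep ρ (f' ρ) β ∈ s) :
    SatisfiesArmijo f f' τ ρ β := by
  have descent := le_add_hsInner_add_of_lipschitzOnWith hs hgrad hf' hρs hstep
  have hsq := sq_norm_egStep_sub_le hρ hherm β
  have hnonpos := hsInner_egStep_sub_nonpos hρ hherm hβ
  set I := hsInner (f' ρ) (egStep ρ (f' ρ) β - ρ)
  calc f (egStep ρ (f' ρ) β) ≤ f ρ + I + K * ‖egStep ρ (f' ρ) β - ρ‖ ^ 2 := descent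
    _ ≤ f ρ + I + K * -(β * I) := by gcongr
    _ = f ρ + I + K * β * -I := by ring
    _ ≤ f ρ + I + (1 - τ) * -I := by
        gcongr
        exact neg_nonneg.2 hnonpos
    _ = f ρ + τ * I := by ring

lemma tendsto_egStep {ρbar : Mat d} (hherm : ∀ ρ, IsNonsingularDensity ρ → (f' ρ).IsHermitian)
    (hf' : ContinuousWithinAt f' {ρ | IsNonsingularDensity ρ} ρbar) :
    Tendsto (fun p : Mat d × ℝ => egStep p.1 (f' p.1) p.2)
      (𝓝[{ρ | IsNonsingularDensity ρ}] ρbar ×ˢ 𝓝[>] 0) (𝓝 ρbar) := by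
  have hfst : Tendsto (fun p : Mat d × ℝ => p.1)
      (𝓝[{ρ | IsNonsingularDensity ρ}] ρbar ×ˢ 𝓝[>] 0) (𝓝 ρbar) :=
    tendsto_fst.mono_right nhdsWithin_le_nhds
  have hbound : Tendsto (fun p : Mat d × ℝ => p.2 * ‖f' p.1‖)
      (𝓝[{ρ | IsNonsingularDensity ρ}] ρbar ×ˢ 𝓝[>] 0) (𝓝 0) := by
    have hsnd : Tendsto (fun p : Mat d × ℝ => p.2)
        (𝓝[{ρ | IsNonsingularDensity ρ}] ρbar ×ˢ 𝓝[>] 0) (𝓝 0) :=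
      tendsto_snd.mono_right nhdsWithin_le_nhds
    have hprod := hsnd.mul (hf'.norm.tendsto.comp tendsto_fst)
    rwa [zero_mul] at hprod
  refine hfst.congr_dist (squeeze_zero' (.of_forall fun _ => dist_nonneg) ?_ hbound)
  filter_upwards [prod_mem_prod self_mem_nhdsWithin self_mem_nhdsWithin] with p hp
  rw [dist_comm, dist_eq_norm]
  exact norm_egStep_sub_le hp.1 (hherm _ hp.1) (le_of_lt hp.2)

lemma eventually_satisfiesArmijo {ρbar : Mat d} (hbar : IsDensity ρbar)
    (hgrad : ∀ x, IsDensity x → HasMatGradientAt f (f' x) x)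
    (hherm : ∀ x, IsNonsingularDensity x → (f' x).IsHermitian)
    (hf' : LocallyLipschitzOn {σ | IsDensity σ} f') {τ : ℝ} (hτ : τ < 1) :
    ∀ᶠ p : Mat d × ℝ in 𝓝[{ρ | IsNonsingularDensity ρ}] ρbar ×ˢ 𝓝[>] 0,
      SatisfiesArmijo f f' τ p.1 p.2 := by
  obtain ⟨K, t, ht, hKt⟩ := hf' hbar
  obtain ⟨ε, hε, hball⟩ := Metric.mem_nhdsWithin_iff.1 ht
  have hstep := (tendsto_egStep hherm <| (hf'.continuousOn ρbar hbar).mono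
    fun _ hρ => hρ.isDensity).eventually (Metric.ball_mem_nhds ρbar hε)
  have hsmall : ∀ᶠ β : ℝ in 𝓝[>] 0, K * β ≤ 1 - τ := by
    have hlim : Tendsto (fun β : ℝ => K * β) (𝓝 0) (𝓝 (K * 0)) :=
      (continuous_const_mul _).tendsto _
    rw [mul_zero] at hlim
    exact nhdsWithin_le_nhds (hlim.eventually_le_const (sub_pos.2 hτ))
  filter_upwards [hstep, prod_mem_prod (nhdsWithin_le_nhds (Metric.ball_mem_nhds ρbar hε))
    hsmall, prod_mem_prod self_mem_nhdsWithin self_mem_nhdsWithin] with p hstep hp hp'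
  exact satisfiesArmijo_of_mul_le ((convex_ball ρbar ε).inter convex_setOf_isDensity)
    (fun x hx => hgrad x hx.2) (hKt.mono hball) hp'.1 (hherm _ hp'.1) hp'.2 hp.2
    ⟨hp.1, hp'.1.isDensity⟩ ⟨hstep, (isNonsingularDensity_egStep _ (hherm _ hp'.1) _).isDensity⟩

lemma exists_forall_satisfiesArmijo {ρbar : Mat d} (hbar : IsDensity ρbar)
    (hgrad : ∀ x, IsDensity x → HasMatGradientAt f (f' x) x)
    (hherm : ∀ x, IsNonsingularDensity x → (f' x).IsHermitian)
    (hf' : LocallyLipschitzOn {σ | IsDensity σ} f') {τ : ℝ} (hτ : τ < 1) :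
    ∃ β₀ > 0, ∀ᶠ ρ in 𝓝[{ρ | IsNonsingularDensity ρ}] ρbar,
      ∀ β ∈ Set.Ioc 0 β₀, SatisfiesArmijo f f' τ ρ β := by
  obtain ⟨pa, ha, pb, hb, hab⟩ :=
    eventually_prod_iff.1 (eventually_satisfiesArmijo hbar hgrad hherm hf' hτ)
  obtain ⟨β₀, hβ₀, hsub⟩ := mem_nhdsGT_iff_exists_Ioc_subset.1 hb
  exact ⟨β₀, hβ₀, ha.mono fun ρ hρ β hβ => hab hρ (hsub hβ)⟩

end Armijo

namespace IsEGArmijo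

open Filter Topology

variable {f : Mat d → ℝ} {f' : Mat d → Mat d} {α r τ : ℝ} {ρseq : ℕ → Mat d} {αseq : ℕ → ℝ}

lemma stepSize_pos (halg : IsEGArmijo f f' α r τ ρseq αseq) (hα : 0 < α) (hr : 0 < r) (k : ℕ) :
    0 < αseq k := by
  obtain ⟨m, hm, -⟩ := halg.2.2 k
  rw [hm]
  positivity

lemma stepSize_le (halg : IsEGArmijo f f' α r τ ρseq αseq) (hα : 0 ≤ α) (hr : 0 ≤ r)
    (hr' : r ≤ 1) (k : ℕ) : αseq k ≤ α := by
  obtain ⟨m, hm, -⟩ := halg.2.2 k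
  rw [hm]
  exact mul_le_of_le_one_right hα (pow_le_one₀ hr hr')

lemma satisfiesArmijo (halg : IsEGArmijo f f' α r τ ρseq αseq) (k : ℕ) :
    SatisfiesArmijo f f' τ (ρseq k) (αseq k) := by
  obtain ⟨-, -, hdecr, -⟩ := halg.2.2 k
  rwa [halg.2.1 k] at hdecr

lemma min_le_stepSize (halg : IsEGArmijo f f' α r τ ρseq αseq) (hα : 0 < α) (hr : 0 < r)
    {k : ℕ} {β₀ : ℝ} (hβ₀ : ∀ β ∈ Set.Ioc 0 β₀, SatisfiesArmijo f f' τ (ρseq k) β) :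
    min α (r * β₀) ≤ αseq k := by
  obtain ⟨m, hm, -, rfl | hfail⟩ := halg.2.2 k
  · exact min_le_of_left_le (by rw [hm, pow_zero, mul_one])
  · refine min_le_of_right_le ?_
    by_contra! hlt
    have hβ : αseq k / r ∈ Set.Ioc 0 β₀ :=
      ⟨div_pos (halg.stepSize_pos hα hr k) hr, ((div_lt_iff₀' hr).2 hlt).le⟩
    exact (hβ₀ _ hβ).not_gt hfail

variable [NeZero d]

lemma isNonsingularDensity (halg : IsEGArmijo f f' α r τ ρseq αseq) (h0 : (ρseq 0).trace = 1)
    (hherm : ∀ x, IsNonsingularDensity x → (f' x).IsHermitian) (k : ℕ) :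
    IsNonsingularDensity (ρseq k) := by
  induction k with
  | zero => exact ⟨halg.1, h0⟩
  | succ k ih =>
    rw [halg.2.1 k]
    exact isNonsingularDensity_egStep _ (hherm _ ih) _

lemma qRelEnt_succ_le (halg : IsEGArmijo f f' α r τ ρseq αseq) (hα : 0 < α) (hr : r ∈ Set.Ioo 0 1)
    (hτ : 0 < τ) {k : ℕ} (hρ : IsNonsingularDensity (ρseq k))
    (hherm : (f' (ρseq k)).IsHermitian) :
    qRelEnt (ρseq (k + 1)) (ρseq k) ≤ α / τ * (f (ρseq k) - f (ρseq (k + 1))) := by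
  have hnonpos := hsInner_egStep_sub_nonpos hρ hherm (halg.stepSize_pos hα hr.1 k)
  have hle := qRelEnt_egStep_le hρ hherm (αseq k)
  have harmijo := halg.satisfiesArmijo k
  rw [SatisfiesArmijo] at harmijo
  rw [← halg.2.1 k] at hnonpos hle harmijo
  set I := hsInner (f' (ρseq k)) (ρseq (k + 1) - ρseq k)
  calc qRelEnt (ρseq (k + 1)) (ρseq k) ≤ αseq k * -I := by rwa [mul_neg]
    _ ≤ α * -I := by
        gcongr
        · exact neg_nonneg.2 hnonpos
        · exact halg.stepSize_le hα.le hr.1.le hr.2.le k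
    _ = α / τ * -(τ * I) := by field_simp
    _ ≤ α / τ * (f (ρseq k) - f (ρseq (k + 1))) := by
        gcongr
        linarith

lemma antitone_objective (halg : IsEGArmijo f f' α r τ ρseq αseq) (hα : 0 < α)
    (hr : r ∈ Set.Ioo 0 1) (hτ : 0 < τ) (hρ : ∀ k, IsNonsingularDensity (ρseq k))
    (hherm : ∀ x, IsNonsingularDensity x → (f' x).IsHermitian) :
    Antitone fun k => f (ρseq k) := by
  refine antitone_nat_of_succ_le fun k => sub_nonneg.1 ?_
  refine nonneg_of_mul_nonneg_right ?_ (div_pos hα hτ)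
  exact (qRelEnt_nonneg (hρ (k + 1)).isDensity (hρ k)).trans
    (halg.qRelEnt_succ_le hα hr hτ (hρ k) (hherm _ (hρ k)))

lemma tendsto_qRelEnt_succ (halg : IsEGArmijo f f' α r τ ρseq αseq) (hα : 0 < α)
    (hr : r ∈ Set.Ioo 0 1) (hτ : 0 < τ) (hρ : ∀ k, IsNonsingularDensity (ρseq k))
    (hherm : ∀ x, IsNonsingularDensity x → (f' x).IsHermitian) {φ : ℕ → ℕ}
    (hφ : Tendsto φ atTop atTop) {l : ℝ}
    (hf : Tendsto (fun j => f (ρseq (φ j))) atTop (𝓝 l)) :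
    Tendsto (fun k => qRelEnt (ρseq (k + 1)) (ρseq k)) atTop (𝓝 0) := by
  have hlim := (tendsto_iff_tendsto_subseq_of_antitone
    (halg.antitone_objective hα hr hτ hρ hherm) hφ).2 hf
  have hdiff := (hlim.sub (hlim.comp (tendsto_add_atTop_nat 1))).const_mul (α / τ)
  rw [sub_self, mul_zero] at hdiff
  exact squeeze_zero (fun k => qRelEnt_nonneg (hρ (k + 1)).isDensity (hρ k))
    (fun k => halg.qRelEnt_succ_le hα hr hτ (hρ k) (hherm _ (hρ k))) hdiff

lemma qRelEnt_egStep_le_succ (halg : IsEGArmijo f f' α r τ ρseq αseq) {k : ℕ}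
    (hherm : (f' (ρseq k)).IsHermitian) {β : ℝ} (hβ : 0 ≤ β) (hβk : β ≤ αseq k) :
    qRelEnt (egStep (ρseq k) (f' (ρseq k)) β) (ρseq k) ≤ qRelEnt (ρseq (k + 1)) (ρseq k) := by
  rw [halg.2.1 k]
  exact monotoneOn_qRelEnt_egStep (ρseq k) hherm hβ (hβ.trans hβk) hβk

end IsEGArmijo

lemma locallyLipschitzOn_of_exists_norm_sub_le {E F : Type*} [SeminormedAddCommGroup E]
    [SeminormedAddCommGroup F] {g : E → F} {s : Set E}
    (hg : ∀ x ∈ s, ∃ V ∈ nhds x, ∃ L : ℝ, ∀ a ∈ V, ∀ b ∈ V, ‖g a - g b‖ ≤ L * ‖a - b‖) :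
    LocallyLipschitzOn s g := by
  intro x hx
  obtain ⟨V, hV, L, hL⟩ := hg x hx
  refine ⟨L.toNNReal, V, mem_nhdsWithin_of_mem_nhds hV, ?_⟩
  refine LipschitzOnWith.of_dist_le' fun a ha b hb => ?_
  rw [dist_eq_norm, dist_eq_norm]
  exact hL a ha b hb

open Filter Topology in
theorem stmt_14_general {f : Mat d → ℝ} {f' : Mat d → Mat d}
    (hgrad : ∀ x, IsDensity x → HasMatGradientAt f (f' x) x)
    (hherm : ∀ x, IsNonsingularDensity x → (f' x).IsHermitian)
    (hlip : LocallyLipschitzOn {σ | IsDensity σ} f') {α r τ : ℝ} (hα : 0 < α)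
    (hr : r ∈ Set.Ioo (0 : ℝ) 1) (hτ : τ ∈ Set.Ioo (0 : ℝ) 1) {ρseq : ℕ → Mat d}
    {αseq : ℕ → ℝ} (h0 : (ρseq 0).trace = 1) (halg : IsEGArmijo f f' α r τ ρseq αseq)
    {φ : ℕ → ℕ} (hφ : Tendsto φ atTop atTop) {ρbar : Mat d} (hbarD : IsDensity ρbar)
    (hsub : Tendsto (fun j => ρseq (φ j)) atTop (𝓝 ρbar)) :
    ∃ β > (0 : ℝ), Tendsto
      (fun j => qRelEnt (egStep (ρseq (φ j)) (f' (ρseq (φ j))) β) (ρseq (φ j)))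
      atTop (𝓝 0) := by
  have := hbarD.neZero
  have hρ := halg.isNonsingularDensity h0 hherm
  obtain ⟨L, hL, -⟩ := hgrad ρbar hbarD
  have hentropy := halg.tendsto_qRelEnt_succ hα hr hτ.1 hρ hherm hφ
    (hL.continuousAt.tendsto.comp hsub)
  obtain ⟨β₀, hβ₀, harmijo⟩ := exists_forall_satisfiesArmijo hbarD hgrad hherm hlip hτ.2
  have hβ : 0 < min α (r * β₀) := lt_min hα (mul_pos hr.1 hβ₀)
  refine ⟨min α (r * β₀), hβ, ?_⟩
  refine squeeze_zero' (.of_forall fun j => qRelEnt_nonneg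
    (isNonsingularDensity_egStep _ (hherm _ (hρ _)) _).isDensity (hρ _)) ?_ (hentropy.comp hφ)
  filter_upwards [(tendsto_nhdsWithin_iff.2 ⟨hsub, .of_forall fun j => hρ (φ j)⟩).eventually
    harmijo] with j hj
  exact halg.qRelEnt_egStep_le_succ (hherm _ (hρ _)) hβ.le (halg.min_le_stepSize hα hr.1 hj)

/-- along any convergent subsequence of the EG–Armijo iterates, there is a
fixed `β > 0` such that `D(ρ_{k_j}(β), ρ_{k_j}) → 0`. -/
theorem stmt_14 {d : ℕ} (hd : 0 < d) (U : Set (Mat d)) (hUopen : IsOpen U)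
    (hUconv : Convex ℝ U) (hDU : {σ : Mat d | IsDensity σ} ⊆ U)
    (f : Mat d → ℝ) (f' : Mat d → Mat d)
    (hconv : ConvexOn ℝ U f)
    (hgrad : ∀ x ∈ U, HasMatGradientAt f (f' x) x)
    (hherm : ∀ x ∈ U, (f' x).IsHermitian)
    (hlip : ∀ x ∈ U, ∃ V ∈ nhds x, V ⊆ U ∧
      ∃ L : ℝ, ∀ a ∈ V, ∀ b ∈ V, ‖f' a - f' b‖ ≤ L * ‖a - b‖)
    (α r τ : ℝ) (hα : 0 < α) (hr : r ∈ Set.Ioo (0:ℝ) 1) (hτ : τ ∈ Set.Ioo (0:ℝ) 1)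
    (ρseq : ℕ → Mat d) (αseq : ℕ → ℝ)
    (hmem : ∀ k, IsDensity (ρseq k))
    (halg : IsEGArmijo f f' α r τ ρseq αseq)
    (φ : ℕ → ℕ) (hφ : StrictMono φ)
    (ρbar : Mat d) (hbarD : IsDensity ρbar)
    (hsub : Filter.Tendsto (fun j => ρseq (φ j)) Filter.atTop (nhds ρbar)) :
    ∃ β > (0:ℝ), Filter.Tendsto
      (fun j => qRelEnt (egStep (ρseq (φ j)) (f' (ρseq (φ j))) β) (ρseq (φ j)))
      Filter.atTop (nhds 0) := by
  exact stmt_14_general (fun x hx => hgrad x (hDU hx)) (fun x hx => hherm x (hDU hx.isDensity))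
    (locallyLipschitzOn_of_exists_norm_sub_le fun x hx =>
      (hlip x (hDU hx)).imp fun _ hV => ⟨hV.1, hV.2.2⟩)
    hα hr hτ (hmem 0).2 halg hφ.tendsto_atTop hbarD hsub

end
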